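/- arXiv:1412.7840 — 2 statements merged into one kernel-verified Lean document; each statement's English description precedes it below -/
import Mathlib

section
/- Suppose the pair (A,B) is controllable (the controllability matrix [B, AB, …, A^{n-1}B] has rank n) and A is nonsingular. Then the L¹ value function V₁ is continuous on the reachable set R. -/
open MeasureTheory Set

noncomputable section

/-- Controllability matrix `[B, AB, ..., A^{n-1}B]`. -/
def ctrbMatrix (n : ℕ) (A : Matrix (Fin n) (Fin n) ℝ) (B : Fin n → ℝ) :
    Matrix (Fin n) (Fin n) ℝ :=
  Matrix.of fun i j => (A ^ (j : ℕ)).mulVec B i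

/-- `∫₀ᵀ e^{-As} B u(s) ds`. -/
def stateInt (n : ℕ) (T : ℝ) (A : Matrix (Fin n) (Fin n) ℝ) (B : Fin n → ℝ)
    (u : ℝ → ℝ) : Fin n → ℝ :=
  ∫ s in Icc (0:ℝ) T, u s • (NormedSpace.exp ((-s) • A)).mulVec B

/-- The magnitude constraint `‖u‖_∞ ≤ 1` on `[0,T]`. -/
def MagBdd (T : ℝ) (u : ℝ → ℝ) : Prop := ∀ t ∈ Icc (0:ℝ) T, |u t| ≤ 1

/-- The `L¹` norm of `u` on `[0,T]`. -/
def L1Norm (T : ℝ) (u : ℝ → ℝ) : ℝ := ∫ t in Icc (0:ℝ) T, |u t|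

/-- The `L⁰` norm of `u`: Lebesgue measure of `{t ∈ [0,T] : u t ≠ 0}`. -/
def L0Norm (T : ℝ) (u : ℝ → ℝ) : ℝ := (volume {t ∈ Icc (0:ℝ) T | u t ≠ 0}).toReal

/-- Admissible controls steering `ξ` to `0` at time `T`:
`∫₀ᵀ e^{-As} B u(s) ds = -ξ` and `‖u‖_∞ ≤ 1`. -/
def Admissible (n : ℕ) (T : ℝ) (A : Matrix (Fin n) (Fin n) ℝ) (B : Fin n → ℝ)
    (ξ : Fin n → ℝ) (u : ℝ → ℝ) : Prop :=
  Measurable u ∧ MagBdd T u ∧ stateInt n T A B u = -ξ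

/-- Value function of the maximum hands-off (`L⁰`-optimal) control problem. -/
def V0 (n : ℕ) (T : ℝ) (A : Matrix (Fin n) (Fin n) ℝ) (B : Fin n → ℝ)
    (ξ : Fin n → ℝ) : ℝ :=
  sInf {c | ∃ u, Admissible n T A B ξ u ∧ c = L0Norm T u}

/-- Value function of the `L¹`-optimal control problem. -/
def V1 (n : ℕ) (T : ℝ) (A : Matrix (Fin n) (Fin n) ℝ) (B : Fin n → ℝ)
    (ξ : Fin n → ℝ) : ℝ :=
  sInf {c | ∃ u, Admissible n T A B ξ u ∧ c = L1Norm T u}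

/-- The reachable set `R`. -/
def Reach (n : ℕ) (T : ℝ) (A : Matrix (Fin n) (Fin n) ℝ) (B : Fin n → ℝ) :
    Set (Fin n → ℝ) :=
  {x | ∃ u, Measurable u ∧ MagBdd T u ∧ x = stateInt n T A B u}

/-- The set `R_α`. -/
def ReachL1 (n : ℕ) (T : ℝ) (A : Matrix (Fin n) (Fin n) ℝ) (B : Fin n → ℝ)
    (α : ℝ) : Set (Fin n → ℝ) :=
  {x | ∃ u, Measurable u ∧ MagBdd T u ∧ L1Norm T u ≤ α ∧ x = stateInt n T A B u}

/-!
The value function is convex on the reachable set `R`, so only relative boundary points `x` of `R`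
are in question. There a linear functional `p`, not constant on `R`, attains its maximum over `R`.
The function `s ↦ p (e^{-As} B)` is analytic, and not identically zero since otherwise `p` would
vanish on `R`; hence it is almost everywhere nonzero. So every control realising `x` has `|u| = 1`
almost everywhere, and its cost is the length of the horizon, the largest possible. A control
realising a nearby `y` satisfies `∫ (1 - |u|) |p (e^{-As} B)| ds ≤ p x - p y`, which forces its cost
to be almost as large.
-/

open Filter Topology

/-- The value function of the problem "minimise `ℓ u` over `u ∈ K` subject to `Φ u = x`".
It has the junk value `0` at infeasible points `x ∉ Φ '' K`. -/
def valueFn {U X : Type*} (K : Set U) (Φ : U → X) (ℓ : U → ℝ) (x : X) : ℝ :=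
  sInf (ℓ '' (K ∩ Φ ⁻¹' {x}))

section ValueFn

variable {U X : Type*} {K : Set U} {Φ : U → X} {ℓ : U → ℝ}

lemma valueFn_le (hℓ : BddBelow (ℓ '' K)) {u : U} (hu : u ∈ K) : valueFn K Φ ℓ (Φ u) ≤ ℓ u :=
  csInf_le (hℓ.mono (image_mono inter_subset_left)) ⟨u, ⟨hu, rfl⟩, rfl⟩

lemma le_valueFn {x : X} (hx : x ∈ Φ '' K) {c : ℝ} (h : ∀ u ∈ K, Φ u = x → c ≤ ℓ u) :
    c ≤ valueFn K Φ ℓ x := by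
  obtain ⟨u, hu, hux⟩ := hx
  refine le_csInf ⟨ℓ u, u, ⟨hu, hux⟩, rfl⟩ ?_
  rintro _ ⟨v, ⟨hv, hvx⟩, rfl⟩
  exact h v hv hvx

lemma exists_lt_valueFn_add {x : X} (hx : x ∈ Φ '' K) {ε : ℝ} (hε : 0 < ε) :
    ∃ u ∈ K, Φ u = x ∧ ℓ u < valueFn K Φ ℓ x + ε := by
  by_contra! h
  linarith [le_valueFn hx h]

lemma convexOn_valueFn [AddCommGroup U] [Module ℝ U] [AddCommGroup X] [Module ℝ X]
    (hℓ : ConvexOn ℝ K ℓ) (hbdd : BddBelow (ℓ '' K))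
    (hΦ : ∀ u ∈ K, ∀ v ∈ K, ∀ a b : ℝ, 0 ≤ a → 0 ≤ b → a + b = 1 →
      Φ (a • u + b • v) = a • Φ u + b • Φ v) :
    ConvexOn ℝ (Φ '' K) (valueFn K Φ ℓ) := by
  constructor
  · rintro _ ⟨u, hu, rfl⟩ _ ⟨v, hv, rfl⟩ a b ha hb hab
    exact ⟨a • u + b • v, hℓ.1 hu hv ha hb hab, hΦ u hu v hv a b ha hb hab⟩
  · intro x hx y hy a b ha hb hab
    refine le_of_forall_pos_le_add fun ε hε ↦ ?_
    obtain ⟨u, hu, rfl, hℓu⟩ := exists_lt_valueFn_add (ℓ := ℓ) hx hε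
    obtain ⟨v, hv, rfl, hℓv⟩ := exists_lt_valueFn_add (ℓ := ℓ) hy hε
    calc valueFn K Φ ℓ (a • Φ u + b • Φ v)
        = valueFn K Φ ℓ (Φ (a • u + b • v)) := by rw [hΦ u hu v hv a b ha hb hab]
      _ ≤ ℓ (a • u + b • v) := valueFn_le hbdd (hℓ.1 hu hv ha hb hab)
      _ ≤ a • ℓ u + b • ℓ v := hℓ.2 hu hv ha hb hab
      _ ≤ a • (valueFn K Φ ℓ (Φ u) + ε) + b • (valueFn K Φ ℓ (Φ v) + ε) := by gcongr
      _ = a • valueFn K Φ ℓ (Φ u) + b • valueFn K Φ ℓ (Φ v) + ε := by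
        simp only [smul_eq_mul]
        linear_combination ε * hab

end ValueFn

section ConvexGeometry

variable {E : Type*} [NormedAddCommGroup E] [NormedSpace ℝ E] [FiniteDimensional ℝ E]
  {C : Set E} {f : E → ℝ}

lemma interior_nonempty_of_convex_of_span_eq_top (hC : Convex ℝ C) (h0 : (0 : E) ∈ C)
    (hspan : Submodule.span ℝ C = ⊤) : (interior C).Nonempty := by
  rw [hC.interior_nonempty_iff_affineSpan_eq_top,
    AffineSubspace.affineSpan_eq_top_iff_vectorSpan_eq_top_of_nonempty ℝ _ _ ⟨0, h0⟩,
    vectorSpan_eq_span_vsub_set_right ℝ h0]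
  simpa using hspan

lemma continuousWithinAt_zero_or_exists_support (hf : ConvexOn ℝ C f) (h0 : (0 : E) ∈ C) :
    ContinuousWithinAt f C 0 ∨
      ∃ p : StrongDual ℝ E, (∀ a ∈ C, p a ≤ 0) ∧ ∃ a ∈ C, p a < 0 := by
  let W := Submodule.span ℝ C
  let D : Set W := (↑) ⁻¹' C
  have hfD : ConvexOn ℝ D (f ∘ W.subtype) := hf.comp_linearMap W.subtype
  have hspan : Submodule.span ℝ D = ⊤ := Submodule.span_span_coe_preimage
  by_cases hint : (0 : W) ∈ interior D
  · left
    have hcont : ContinuousWithinAt (f ∘ W.subtype) D 0 :=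
      (hfD.continuousOn_interior.continuousAt (isOpen_interior.mem_nhds hint)).continuousWithinAt
    have hDC : (↑) '' D = C := Subtype.coe_image_of_subset Submodule.subset_span
    have hmap : map (↑) (𝓝[D] (0 : W)) = 𝓝[C] (0 : E) := by
      rw [IsEmbedding.subtypeVal.map_nhdsWithin_eq, hDC, ZeroMemClass.coe_zero]
    rw [ContinuousWithinAt, ← hmap, tendsto_map'_iff]
    exact hcont
  · right
    obtain ⟨q, hq, hqD⟩ := geometric_hahn_banach_of_nonempty_interior_point hfD.1 hint
      (interior_nonempty_of_convex_of_span_eq_top hfD.1 h0 hspan)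
    obtain ⟨p, hpq, -⟩ := exists_extension_norm_eq W q
    have hpC : ∀ a ∈ C, p a ≤ 0 := fun a ha ↦
      (hpq ⟨a, Submodule.subset_span ha⟩).trans_le (by simpa using hqD _ ha)
    refine ⟨p, hpC, ?_⟩
    by_contra! hneg
    refine hq (ContinuousLinearMap.coe_injective (LinearMap.ext_on hspan fun w hw ↦ ?_))
    simpa [hpq] using le_antisymm (hpC w hw) (hneg w hw)

-- The alternatives correspond to the relative interior and the relative boundary of `C`.
lemma continuousWithinAt_or_exists_support {x : E} (hf : ConvexOn ℝ C f) (hx : x ∈ C) :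
    ContinuousWithinAt f C x ∨
      ∃ p : StrongDual ℝ E, (∀ a ∈ C, p a ≤ p x) ∧ ∃ a ∈ C, p a < p x := by
  refine (continuousWithinAt_zero_or_exists_support (hf.translate_right x) (by simpa)).imp ?_ ?_
  · intro hcont
    have hsub : ContinuousWithinAt (fun y ↦ y - x) C x := by fun_prop
    have hcomp := ContinuousWithinAt.comp_of_eq hcont hsub (fun y hy ↦ by simpa) (sub_self x)
    simpa [Function.comp_def] using hcomp
  · rintro ⟨p, hle, a, ha, hlt⟩
    refine ⟨p, fun b hb ↦ ?_, x + a, ha, by simpa using hlt⟩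
    simpa using hle (b - x) (by simpa)

end ConvexGeometry

lemma continuousWithinAt_of_le_of_forall_sub_le {X : Type*} [TopologicalSpace X] {s : Set X}
    {F h : X → ℝ} {x : X} {M : ℝ} {c : ℕ → ℝ} (hx : x ∈ s) (hh : ContinuousWithinAt h s x)
    (hx0 : h x = 0) (hc : Tendsto c atTop (𝓝 0)) (hle : ∀ y ∈ s, F y ≤ M)
    (hge : ∀ k : ℕ, ∀ y ∈ s, M - c k - k * h y ≤ F y) : ContinuousWithinAt F s x := by
  have hlim : Tendsto (fun k ↦ M - c k) atTop (𝓝 M) := by simpa using hc.const_sub M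
  have hFx : F x = M :=
    (hle x hx).antisymm <| le_of_tendsto' hlim fun k ↦ by simpa [hx0] using hge k x hx
  rw [ContinuousWithinAt, hFx]
  refine tendsto_order.2 ⟨fun a ha ↦ ?_, fun b hb ↦ ?_⟩
  · obtain ⟨k, hk⟩ := (hlim.eventually (lt_mem_nhds ha)).exists
    have hbound : Tendsto (fun y ↦ M - c k - k * h y) (𝓝[s] x) (𝓝 (M - c k)) := by
      simpa [hx0] using (hh.tendsto.const_mul (k : ℝ)).const_sub (M - c k)
    filter_upwards [hbound.eventually (lt_mem_nhds hk), self_mem_nhdsWithin] with y hy hys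
    exact hy.trans_le (hge k y hys)
  · filter_upwards [self_mem_nhdsWithin] with y hys
    exact (hle y hys).trans_lt hb

section Controls

variable {α : Type*} {_ : MeasurableSpace α} {μ : Measure α}

/-- The scalar controls of magnitude at most one, with the constraint imposed `μ`-a.e. -/
def unitControls (μ : Measure α) : Set (α → ℝ) :=
  {u | AEStronglyMeasurable u μ ∧ ∀ᵐ t ∂μ, |u t| ≤ 1}

lemma integrable_of_mem_unitControls [IsFiniteMeasure μ] {u : α → ℝ} (hu : u ∈ unitControls μ) :
    Integrable u μ :=
  .of_bound hu.1 1 hu.2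

lemma convex_unitControls : Convex ℝ (unitControls μ) := by
  rintro u ⟨hum, hu⟩ v ⟨hvm, hv⟩ a b ha hb hab
  refine ⟨(hum.const_smul a).add (hvm.const_smul b), ?_⟩
  filter_upwards [hu, hv] with t hut hvt
  rw [← Real.norm_eq_abs, ← mem_closedBall_zero_iff] at hut hvt ⊢
  exact convex_closedBall 0 1 hut hvt ha hb hab

lemma neg_mem_unitControls {u : α → ℝ} (hu : u ∈ unitControls μ) : -u ∈ unitControls μ :=
  ⟨hu.1.neg, by simpa using hu.2⟩

lemma div_abs_mem_unitControls {f : α → ℝ} (hf : AEStronglyMeasurable f μ) :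
    (fun t ↦ f t / |f t|) ∈ unitControls μ := by
  refine ⟨(hf.aemeasurable.div hf.norm.aemeasurable).aestronglyMeasurable, .of_forall fun t ↦ ?_⟩
  rw [abs_div, abs_abs]
  exact div_self_le_one _

lemma exists_measurable_abs_le_one_ae_eq {u : α → ℝ} (hu : u ∈ unitControls μ) :
    ∃ v : α → ℝ, Measurable v ∧ (∀ t, |v t| ≤ 1) ∧ v =ᵐ[μ] u := by
  obtain ⟨⟨w, hw, huw⟩, hu1⟩ := hu
  refine ⟨fun t ↦ max (-1) (min 1 (w t)), by fun_prop, fun t ↦ abs_le.2 ⟨by simp, by simp⟩, ?_⟩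
  filter_upwards [huw, hu1] with t ht hut
  rw [← ht, min_eq_right (abs_le.1 hut).2, max_eq_right (abs_le.1 hut).1]

lemma convexOn_integral_abs : ConvexOn ℝ {u : α → ℝ | Integrable u μ} fun u ↦ ∫ t, |u t| ∂μ := by
  refine ⟨fun u hu v hv a b _ _ _ ↦ (hu.smul a).add (hv.smul b), fun u hu v hv a b ha hb _ ↦ ?_⟩
  simp only [smul_eq_mul, ← integral_const_mul]
  rw [← integral_add (hu.abs.const_mul a) (hv.abs.const_mul b)]
  refine integral_mono ((hu.smul a).add (hv.smul b)).abs
    ((hu.abs.const_mul a).add (hv.abs.const_mul b)) fun t ↦ ?_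
  simpa [abs_mul, abs_of_nonneg, ha, hb] using abs_add_le (a * u t) (b * v t)

lemma tendsto_integral_max_zero_one_sub_mul_abs [IsFiniteMeasure μ] {f : α → ℝ}
    (hf : AEStronglyMeasurable f μ) (hne : ∀ᵐ t ∂μ, f t ≠ 0) :
    Tendsto (fun k : ℕ ↦ ∫ t, max 0 (1 - k * |f t|) ∂μ) atTop (𝓝 0) := by
  have hbound (k : ℕ) (t : α) : ‖max 0 (1 - k * |f t|)‖ ≤ 1 := by
    rw [Real.norm_of_nonneg (le_max_left _ _)]
    exact max_le zero_le_one (sub_le_self _ (by positivity))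
  have hlim : ∀ᵐ t ∂μ, Tendsto (fun k : ℕ ↦ max 0 (1 - k * |f t|)) atTop (𝓝 0) := by
    filter_upwards [hne] with t ht
    have htop : Tendsto (fun k : ℕ ↦ k * |f t|) atTop atTop :=
      tendsto_natCast_atTop_atTop.atTop_mul_const (abs_pos.2 ht)
    refine tendsto_const_nhds.congr' ?_
    filter_upwards [htop.eventually_ge_atTop 1] with k hk
    rw [max_eq_left (sub_nonpos.2 hk)]
  simpa using tendsto_integral_of_dominated_convergence (fun _ ↦ (1 : ℝ))
    (fun k ↦ aestronglyMeasurable_const.sup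
      (aestronglyMeasurable_const.sub (hf.norm.const_mul (k : ℝ))))
    (integrable_const 1) (fun k ↦ .of_forall (hbound k)) hlim

lemma measureReal_sub_integral_abs_le [IsFiniteMeasure μ] {f u : α → ℝ} (hf : Integrable f μ)
    (hu : u ∈ unitControls μ) {k : ℝ} (hk : 0 ≤ k) :
    μ.real univ - ∫ t, |u t| ∂μ ≤
      k * (∫ t, |f t| ∂μ - ∫ t, u t * f t ∂μ) + ∫ t, max 0 (1 - k * |f t|) ∂μ := by
  have hui := integrable_of_mem_unitControls hu
  have huf : Integrable (fun t ↦ u t * f t) μ := hf.bdd_mul hu.1 hu.2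
  have hgap : Integrable (fun t ↦ k * (|f t| - u t * f t)) μ := (hf.abs.sub huf).const_mul _
  have hmax : Integrable (fun t ↦ max 0 (1 - k * |f t|)) μ :=
    (integrable_zero α ℝ μ).sup ((integrable_const 1).sub (hf.abs.const_mul k))
  calc μ.real univ - ∫ t, |u t| ∂μ = ∫ t, (1 - |u t|) ∂μ := by
        rw [integral_sub (integrable_const 1) hui.abs]; simp
    _ ≤ ∫ t, (k * (|f t| - u t * f t) + max 0 (1 - k * |f t|)) ∂μ := by
        refine integral_mono_ae ((integrable_const 1).sub hui.abs) (hgap.add hmax) ?_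
        filter_upwards [hu.2] with t ht
        -- Split `1 - |u|` as `(1 - |u|) * (1 - k * |f|) + k * (1 - |u|) * |f|`.
        have hslack : (1 - |u t|) * (1 - k * |f t|) ≤ max 0 (1 - k * |f t|) :=
          (mul_le_mul_of_nonneg_left (le_max_right _ _) (sub_nonneg.2 ht)).trans
            (mul_le_of_le_one_left (le_max_left _ _) (sub_le_self _ (abs_nonneg _)))
        have huft : u t * f t ≤ |u t| * |f t| := by rw [← abs_mul]; exact le_abs_self _
        linarith [mul_le_mul_of_nonneg_left huft hk]
    _ = _ := by
        rw [integral_add hgap hmax, integral_const_mul, integral_sub hf.abs huf]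

end Controls

section Steering

variable {α : Type*} {_ : MeasurableSpace α} {μ : Measure α}
  {E : Type*} [NormedAddCommGroup E] [NormedSpace ℝ E] {g : α → E}

/-- The quantity `∫ u g dμ` constrained when steering with the control `u`. The system enters only
through the curve `g`, which is `t ↦ e^{-At}B` for `ẋ = Ax + Bu`. -/
def steer (μ : Measure α) (g : α → E) (u : α → ℝ) : E := ∫ t, u t • g t ∂μ

/-- The least `L¹` cost `∫ |u| dμ` among the controls `|u| ≤ 1` with `∫ u g dμ = x`. -/
def minL1 (μ : Measure α) (g : α → E) : E → ℝ :=
  valueFn (unitControls μ) (steer μ g) fun u ↦ ∫ t, |u t| ∂μ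

lemma integrable_smul_of_mem_unitControls (hg : Integrable g μ) {u : α → ℝ}
    (hu : u ∈ unitControls μ) : Integrable (fun t ↦ u t • g t) μ :=
  hg.bdd_smul 1 hu.1 hu.2

lemma steer_neg (u : α → ℝ) : steer μ g (-u) = -steer μ g u := by
  simp only [steer, Pi.neg_apply, neg_smul, integral_neg]

lemma steer_smul_add_smul (hg : Integrable g μ) {u v : α → ℝ} (hu : u ∈ unitControls μ)
    (hv : v ∈ unitControls μ) (a b : ℝ) :
    steer μ g (a • u + b • v) = a • steer μ g u + b • steer μ g v := by
  have hug : Integrable (fun t ↦ a • u t • g t) μ :=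
    (integrable_smul_of_mem_unitControls hg hu).smul a
  have hvg : Integrable (fun t ↦ b • v t • g t) μ :=
    (integrable_smul_of_mem_unitControls hg hv).smul b
  simp only [steer, ← integral_smul]
  rw [← integral_add hug hvg]
  simp only [Pi.add_apply, Pi.smul_apply, smul_eq_mul, add_smul, mul_smul]

lemma bddBelow_image_integral_abs (K : Set (α → ℝ)) :
    BddBelow ((fun u ↦ ∫ t, |u t| ∂μ) '' K) :=
  ⟨0, forall_mem_image.2 fun _ _ ↦ integral_nonneg fun _ ↦ abs_nonneg _⟩

lemma convexOn_minL1 [IsFiniteMeasure μ] (hg : Integrable g μ) :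
    ConvexOn ℝ (steer μ g '' unitControls μ) (minL1 μ g) :=
  convexOn_valueFn
    (convexOn_integral_abs.subset (fun _ ↦ integrable_of_mem_unitControls) convex_unitControls)
    (bddBelow_image_integral_abs _) fun _ hu _ hv a b _ _ _ ↦
      steer_smul_add_smul hg hu hv a b

lemma minL1_le_measureReal_univ [IsFiniteMeasure μ] {x : E} (hx : x ∈ steer μ g '' unitControls μ) :
    minL1 μ g x ≤ μ.real univ := by
  obtain ⟨u, hu, rfl⟩ := hx
  calc minL1 μ g (steer μ g u) ≤ ∫ t, |u t| ∂μ := valueFn_le (bddBelow_image_integral_abs _) hu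
    _ ≤ ∫ _, (1 : ℝ) ∂μ :=
      integral_mono_ae (integrable_of_mem_unitControls hu).abs (integrable_const 1) hu.2
    _ = μ.real univ := by simp

variable [CompleteSpace E]

lemma dual_steer (hg : Integrable g μ) {u : α → ℝ} (hu : u ∈ unitControls μ)
    (p : StrongDual ℝ E) : p (steer μ g u) = ∫ t, u t * p (g t) ∂μ := by
  simpa [steer] using (p.integral_comp_comm (integrable_smul_of_mem_unitControls hg hu)).symm

lemma integral_abs_dual_le (hg : Integrable g μ) {p : StrongDual ℝ E} {c : ℝ}
    (hp : ∀ y ∈ steer μ g '' unitControls μ, p y ≤ c) : ∫ t, |p (g t)| ∂μ ≤ c := by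
  have hu := div_abs_mem_unitControls (p.integrable_comp hg).1
  have hle := hp _ (mem_image_of_mem _ hu)
  rw [dual_steer hg hu] at hle
  refine (integral_congr_ae (.of_forall fun t ↦ ?_)).trans_le hle
  simp only [div_mul_eq_mul_div, ← abs_mul_abs_self (p (g t)), mul_self_div_self]

lemma continuousWithinAt_minL1_of_support [IsFiniteMeasure μ] (hg : Integrable g μ) {x : E}
    (hx : x ∈ steer μ g '' unitControls μ) {p : StrongDual ℝ E}
    (hp : ∀ y ∈ steer μ g '' unitControls μ, p y ≤ p x) (hne : ∀ᵐ t ∂μ, p (g t) ≠ 0) :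
    ContinuousWithinAt (minL1 μ g) (steer μ g '' unitControls μ) x := by
  have hpg : Integrable (fun t ↦ p (g t)) μ := p.integrable_comp hg
  refine continuousWithinAt_of_le_of_forall_sub_le (h := fun y ↦ p x - p y) hx (by fun_prop)
    (sub_self _) (tendsto_integral_max_zero_one_sub_mul_abs hpg.1 hne)
    (fun y hy ↦ minL1_le_measureReal_univ hy) fun k y hy ↦ le_valueFn hy ?_
  rintro u hu rfl
  have hcost := measureReal_sub_integral_abs_le hpg hu (Nat.cast_nonneg k)
  have hsupp : k * ∫ t, |p (g t)| ∂μ ≤ k * p x := by gcongr; exact integral_abs_dual_le hg hp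
  rw [← dual_steer hg hu] at hcost
  linarith

theorem continuousOn_minL1 [FiniteDimensional ℝ E] [IsFiniteMeasure μ] (hg : Integrable g μ)
    (hdich : ∀ p : StrongDual ℝ E, (∀ᵐ t ∂μ, p (g t) = 0) ∨ ∀ᵐ t ∂μ, p (g t) ≠ 0) :
    ContinuousOn (minL1 μ g) (steer μ g '' unitControls μ) := by
  intro x hx
  obtain hcont | ⟨p, hp, y, hy, hlt⟩ := continuousWithinAt_or_exists_support (convexOn_minL1 hg) hx
  · exact hcont
  refine continuousWithinAt_minL1_of_support hg hx hp ((hdich p).resolve_left fun hzero ↦ hlt.ne ?_)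
  have hvanish : ∀ z ∈ steer μ g '' unitControls μ, p z = 0 := by
    rintro _ ⟨u, hu, rfl⟩
    rw [dual_steer hg hu]
    exact integral_eq_zero_of_ae (hzero.mono fun t ht ↦ by simp [ht])
  rw [hvanish y hy, hvanish x hx]

end Steering

section AnalyticCurve

lemma eq_zero_or_ae_restrict_ne_zero_of_analytic {f : ℝ → ℝ} (hf : AnalyticOnNhd ℝ f univ)
    {s : Set ℝ} (hs : MeasurableSet s) : (∀ t, f t = 0) ∨ ∀ᵐ t ∂volume.restrict s, f t ≠ 0 := by
  refine or_iff_not_imp_left.2 fun hzero ↦ ?_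
  obtain ⟨t, ht⟩ := not_forall.1 hzero
  exact ae_restrict_le_codiscreteWithin hs
    (codiscreteWithin_mono (subset_univ s) (hf.preimage_zero_mem_codiscrete ht))

theorem continuousOn_minL1_of_analytic {E : Type*} [NormedAddCommGroup E] [NormedSpace ℝ E]
    [FiniteDimensional ℝ E] {g : ℝ → E} (hg : AnalyticOnNhd ℝ g univ) (a b : ℝ) :
    ContinuousOn (minL1 (volume.restrict (Icc a b)) g)
      (steer (volume.restrict (Icc a b)) g '' unitControls (volume.restrict (Icc a b))) := by
  have : CompleteSpace E := FiniteDimensional.complete ℝ E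
  have hint : IntegrableOn g (Icc a b) := (hg.continuousOn.mono (subset_univ _)).integrableOn_Icc
  refine continuousOn_minL1 hint fun p ↦ ?_
  have hpg : AnalyticOnNhd ℝ (fun t ↦ p (g t)) univ := fun t ht ↦
    (p.analyticAt (g t)).comp (hg t ht)
  exact (eq_zero_or_ae_restrict_ne_zero_of_analytic hpg measurableSet_Icc).imp_left .of_forall

open scoped Matrix.Norms.Operator in
lemma analyticOnNhd_exp_neg_smul_mulVec {ι : Type*} [Fintype ι] [DecidableEq ι]
    (A : Matrix ι ι ℝ) (B : ι → ℝ) :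
    AnalyticOnNhd ℝ (fun s : ℝ ↦ (NormedSpace.exp ((-s) • A)).mulVec B) univ := by
  intro s _
  have hexp : AnalyticAt ℝ (fun s : ℝ ↦ NormedSpace.exp ((-s) • A)) s :=
    AnalyticAt.fun_comp (f := fun s : ℝ ↦ (-s) • A) (NormedSpace.exp_analytic (𝕂 := ℝ) _)
      (by fun_prop)
  exact (((Matrix.mulVecBilin ℝ ℝ).flip B).toContinuousLinearMap.analyticAt _).comp hexp

end AnalyticCurve

section LinearSystem

lemma mem_unitControls_of_magBdd {T : ℝ} {u : ℝ → ℝ} (hum : Measurable u) (hu : MagBdd T u) :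
    u ∈ unitControls (volume.restrict (Icc 0 T)) :=
  ⟨hum.aestronglyMeasurable, ae_restrict_of_forall_mem measurableSet_Icc hu⟩

variable (n : ℕ) (T : ℝ) (A : Matrix (Fin n) (Fin n) ℝ) (B : Fin n → ℝ)

lemma V1_eq_minL1_neg (ξ : Fin n → ℝ) :
    V1 n T A B ξ = minL1 (volume.restrict (Icc 0 T))
      (fun s ↦ (NormedSpace.exp ((-s) • A)).mulVec B) (-ξ) := by
  refine congrArg sInf (Subset.antisymm ?_ ?_)
  · rintro _ ⟨u, ⟨hum, hu, huξ⟩, rfl⟩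
    exact ⟨u, ⟨mem_unitControls_of_magBdd hum hu, huξ⟩, rfl⟩
  · rintro _ ⟨u, ⟨hu, huξ⟩, rfl⟩
    obtain ⟨v, hvm, hv, hvu⟩ := exists_measurable_abs_le_one_ae_eq hu
    refine ⟨v, ⟨hvm, fun t _ ↦ hv t, ?_⟩, integral_congr_ae (hvu.mono fun t ht ↦ by simp [ht])⟩
    rw [← mem_singleton_iff.1 huξ]
    exact integral_congr_ae (hvu.mono fun t ht ↦ by simp [ht])

lemma neg_mem_image_steer_of_mem_Reach {ξ : Fin n → ℝ} (hξ : ξ ∈ Reach n T A B) :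
    -ξ ∈ steer (volume.restrict (Icc 0 T)) (fun s ↦ (NormedSpace.exp ((-s) • A)).mulVec B) ''
      unitControls (volume.restrict (Icc 0 T)) := by
  obtain ⟨u, hum, hu, rfl⟩ := hξ
  exact ⟨-u, neg_mem_unitControls (mem_unitControls_of_magBdd hum hu), steer_neg u⟩

theorem L1_value_function_continuousOn_general :
    ContinuousOn (V1 n T A B) (Reach n T A B) := by
  rw [funext (V1_eq_minL1_neg n T A B)]
  exact (continuousOn_minL1_of_analytic (analyticOnNhd_exp_neg_smul_mulVec A B) 0 T).comp
    continuousOn_neg fun _ hξ ↦ neg_mem_image_steer_of_mem_Reach n T A B hξ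

end LinearSystem

theorem L1_value_function_continuousOn (n : ℕ) (T : ℝ) (hT : 0 < T)
    (A : Matrix (Fin n) (Fin n) ℝ) (B : Fin n → ℝ)
    (hctrb : (ctrbMatrix n A B).rank = n) (hA : A.det ≠ 0) :
    ContinuousOn (V1 n T A B) (Reach n T A B) :=
  L1_value_function_continuousOn_general n T A B
end
end

section
/- Suppose the pair (A,B) is controllable (the controllability matrix [B, AB, …, A^{n-1}B] has rank n) and A is nonsingular. Then the value function V of the maximum hands-off control problem is strictly convex on the reachable set R: for all distinct ξ, η ∈ R and all λ ∈ (0,1), V((1-λ)ξ + λη) < (1-λ)V(ξ) + λV(η). -/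
open MeasureTheory Set

noncomputable section

/-!
The value function `V1` of the `L¹` problem is convex, so each `ξ ∈ R` has multipliers
`(p, a) ≠ 0`, `p ≥ 0`, with `p V1 - a` minimal over `R` at `ξ`. By duality, controls that are
nearly optimal for `ξ` nearly minimize the Lagrangian `∫ (p |u| + u a(e^{-As} B)) ds` over all
`|u| ≤ 1`. Its integrand has a unique pointwise minimizer wherever `|a(e^{-As} B)| ≠ p`, which is
almost everywhere: `s ↦ a(e^{-As} B)` is analytic, and if it were constant, its derivatives at `0`
would give `a A = 0` by controllability, hence `a = 0` as `A` is nonsingular. So minimizing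
sequences for `ξ` converge, up to extraction, almost everywhere to the minimizer, a bang-off-bang
control determined by `(p, a)` alone. Being admissible for one state only, it forces `p V1 - a` to
have `ξ` as its only minimizer, which makes `V1` strictly convex. Since it takes only the values
`-1`, `0` and `1`, its `L⁰` and `L¹` norms agree, so that the value functions coincide on `R`.
-/

open Filter Topology

lemma exists_supporting_functional {E : Type*} [NormedAddCommGroup E] [NormedSpace ℝ E]
    [FiniteDimensional ℝ E] {s : Set E} (hs : Convex ℝ s) (hne : s.Nonempty)
    {x : E} (hx : x ∉ interior s) :
    ∃ f : StrongDual ℝ E, f ≠ 0 ∧ ∀ y ∈ s, f y ≤ f x := by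
  by_cases hint : (interior s).Nonempty
  · exact geometric_hahn_banach_of_nonempty_interior_point hs hx hint
  · have hspan : vectorSpan ℝ s < ⊤ := by
      rwa [lt_top_iff_ne_top, Ne,
        ← AffineSubspace.affineSpan_eq_top_iff_vectorSpan_eq_top_of_nonempty ℝ _ _ hne,
        ← hs.interior_nonempty_iff_affineSpan_eq_top]
    obtain ⟨f, hf, hker⟩ := Submodule.exists_le_ker_of_lt_top _ hspan
    have hconst : ∀ y ∈ s, ∀ z ∈ s, f y = f z := fun y hy z hz =>
      LinearMap.sub_mem_ker_iff.1 (hker (vsub_mem_vectorSpan ℝ hy hz))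
    obtain ⟨z, hz⟩ := hne
    have hf' : f.toContinuousLinearMap ≠ 0 := by simpa using hf
    rcases le_total (f z) (f x) with hzx | hxz
    · exact ⟨f.toContinuousLinearMap, hf', fun y hy => (hconst y hy z hz).trans_le hzx⟩
    · refine ⟨-f.toContinuousLinearMap, neg_ne_zero.2 hf', fun y hy => neg_le_neg ?_⟩
      exact hxz.trans_eq (hconst z hz y hy)

/-- Unlike a subgradient, a multiplier pair `(p, a)` exists at boundary points of the domain too,
where `p = 0` is possible. -/
lemma exists_multipliers_of_convexOn {E : Type*} [NormedAddCommGroup E] [NormedSpace ℝ E]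
    [FiniteDimensional ℝ E] {s : Set E} {f : E → ℝ} (hf : ConvexOn ℝ s f) {x : E} (hx : x ∈ s) :
    ∃ p : ℝ, 0 ≤ p ∧ ∃ a : StrongDual ℝ E, (p = 0 → a ≠ 0) ∧
      ∀ y ∈ s, p * f x - a x ≤ p * f y - a y := by
  set K : Set (E × ℝ) := {z | z.1 ∈ s ∧ f z.1 ≤ z.2}
  have hxK : (x, f x) ∉ interior K := fun hmem => by
    have hbelow : ∀ᶠ y in 𝓝 (f x), f x ≤ y :=
      (Continuous.prodMk_right x).continuousAt.eventually (mem_interior_iff_mem_nhds.1 hmem)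
        |>.mono fun _ h => h.2
    have hlt : ∀ᶠ y in 𝓝[<] f x, y < f x := eventually_mem_nhdsWithin
    obtain ⟨y, hyx, hy⟩ := ((hbelow.filter_mono nhdsWithin_le_nhds).and hlt).exists
    exact hyx.not_gt hy
  obtain ⟨g, hg, hle⟩ :=
    exists_supporting_functional hf.convex_epigraph ⟨(x, f x), hx, le_rfl⟩ hxK
  have hsplit (y : E) (t : ℝ) : g (y, t) = g (y, 0) + t * g (0, 1) := by
    rw [← smul_eq_mul, ← map_smul, ← map_add]
    simp
  refine ⟨-g (0, 1), ?_, g.comp (.inl ℝ E ℝ), fun hp ha => hg ?_, fun y hy => ?_⟩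
  · have hup := hle (x, f x + 1) ⟨hx, by simp⟩
    rw [hsplit, hsplit x (f x)] at hup
    linarith
  · ext z
    · exact DFunLike.congr_fun ha z
    · simpa using hp
  · have hy_le := hle (y, f y) ⟨hy, le_rfl⟩
    rw [hsplit, hsplit x (f x)] at hy_le
    simp only [ContinuousLinearMap.comp_apply, ContinuousLinearMap.inl_apply]
    linarith

lemma strictConvexOn_of_forall_exists_multipliers {E : Type*} [AddCommGroup E] [Module ℝ E]
    {s : Set E} {f : E → ℝ} (hs : Convex ℝ s)
    (h : ∀ x ∈ s, ∃ p : ℝ, 0 ≤ p ∧ ∃ a : Module.Dual ℝ E,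
      ∀ y ∈ s, y ≠ x → p * f x - a x < p * f y - a y) :
    StrictConvexOn ℝ s f := by
  refine ⟨hs, fun x hx y hy hxy b c hb hc hbc => ?_⟩
  set z := b • x + c • y with hz
  obtain ⟨p, hp, a, hlt⟩ := h z (hs hx hy hb.le hc.le hbc)
  have hxz : x ≠ z := fun h => hxy (left_mem_openSegment_iff.1 ⟨b, c, hb, hc, hbc, h.symm⟩)
  have hyz : y ≠ z := fun h => hxy (right_mem_openSegment_iff.1 ⟨b, c, hb, hc, hbc, h.symm⟩)
  have haz : a z = b * a x + c * a y := by simp [hz]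
  refine lt_of_mul_lt_mul_left ?_ hp
  calc p * f z = b * (p * f z - a z) + c * (p * f z - a z) + a z := by
        rw [← add_mul, hbc]; ring
    _ < b * (p * f x - a x) + c * (p * f y - a y) + a z := by
        gcongr ?_ + ?_ + _
        · exact mul_lt_mul_of_pos_left (hlt x hx hxz) hb
        · exact mul_lt_mul_of_pos_left (hlt y hy hyz) hc
    _ = p * (b • f x + c • f y) := by rw [haz]; simp only [smul_eq_mul]; ring

lemma ae_ne_of_analyticOnNhd {f : ℝ → ℝ} (hf : AnalyticOnNhd ℝ f univ) {c x : ℝ}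
    (hx : f x ≠ c) : ∀ᵐ s, f s ≠ c := by
  have hcod := (hf.sub analyticOnNhd_const).preimage_zero_mem_codiscrete (sub_ne_zero.2 hx)
  have hae := ae_restrict_le_codiscreteWithin (μ := volume) MeasurableSet.univ hcod
  rw [Measure.restrict_univ] at hae
  filter_upwards [hae] with s hs hsc
  exact hs (sub_eq_zero.2 hsc)

lemma exists_seq_tendsto_ae_of_tendsto_integral_abs_mul {α : Type*} [MeasurableSpace α]
    {μ : Measure α} {w : α → ℝ} {f : ℕ → α → ℝ} (hw : ∀ᵐ x ∂μ, w x ≠ 0)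
    (hf : ∀ k, Integrable (fun x => w x * f k x) μ)
    (hlim : Tendsto (fun k => ∫ x, |w x * f k x| ∂μ) atTop (𝓝 0)) :
    ∃ ns : ℕ → ℕ, StrictMono ns ∧ ∀ᵐ x ∂μ, Tendsto (fun k => f (ns k) x) atTop (𝓝 0) := by
  have hmeas : TendstoInMeasure μ (fun k x => w x * f k x) atTop 0 := by
    refine tendstoInMeasure_of_tendsto_eLpNorm one_ne_zero
      (fun k => (hf k).aestronglyMeasurable) aestronglyMeasurable_zero ?_
    have heq (k : ℕ) : eLpNorm ((fun x => w x * f k x) - 0) 1 μ =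
        ENNReal.ofReal (∫ x, |w x * f k x| ∂μ) := by
      rw [sub_zero, eLpNorm_one_eq_lintegral_enorm,
        ← ofReal_integral_norm_eq_lintegral_enorm (hf k)]
      rfl
    simpa only [heq, ENNReal.ofReal_zero] using ENNReal.tendsto_ofReal hlim
  obtain ⟨ns, hns, hae⟩ := hmeas.exists_seq_tendsto_ae
  refine ⟨ns, hns, ?_⟩
  filter_upwards [hae, hw] with x hx hwx
  simpa [hwx] using hx.const_mul (w x)⁻¹

section InputCurve

open scoped Matrix.Norms.Operator Matrix

variable {ι : Type*} [Fintype ι] [DecidableEq ι]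

/-- The curve `s ↦ e^{-As} B` against which controls are integrated to give the state. -/
def inputCurve (A : Matrix ι ι ℝ) (B : ι → ℝ) (s : ℝ) : ι → ℝ :=
  NormedSpace.exp ((-s) • A) *ᵥ B

lemma inputCurve_zero (A : Matrix ι ι ℝ) (B : ι → ℝ) : inputCurve A B 0 = B := by
  simp [inputCurve]

lemma analyticOnNhd_inputCurve (A : Matrix ι ι ℝ) (B : ι → ℝ) :
    AnalyticOnNhd ℝ (inputCurve A B) univ := fun s _ => by
  have hexp : AnalyticAt ℝ (fun t : ℝ => NormedSpace.exp ((-t) • A)) s :=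
    (NormedSpace.exp_analytic ((-s) • A)).fun_comp (f := fun t : ℝ => (-t) • A) (by fun_prop)
  exact (((Matrix.mulVecBilin ℝ ℝ).flip B).toContinuousLinearMap.analyticAt _).comp hexp

lemma continuous_inputCurve (A : Matrix ι ι ℝ) (B : ι → ℝ) : Continuous (inputCurve A B) :=
  continuousOn_univ.1 (analyticOnNhd_inputCurve A B).continuousOn

lemma hasDerivAt_inputCurve (A : Matrix ι ι ℝ) (B : ι → ℝ) (s : ℝ) :
    HasDerivAt (inputCurve A B) (-inputCurve A (A *ᵥ B) s) s := by
  have hexp := (hasDerivAt_exp_smul_const (𝕂 := ℝ) A (-s)).scomp s (hasDerivAt_neg s)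
  refine (((Matrix.mulVecBilin ℝ ℝ).flip B).toContinuousLinearMap.hasFDerivAt.comp_hasDerivAt s
    hexp).congr_deriv ?_
  change ((-1 : ℝ) • (NormedSpace.exp ((-s) • A) * A)) *ᵥ B =
    -(NormedSpace.exp ((-s) • A) *ᵥ A *ᵥ B)
  rw [neg_one_smul, Matrix.neg_mulVec, Matrix.mulVec_mulVec]

lemma apply_inputCurve_mulVec_eq_zero {A : Matrix ι ι ℝ} {B : ι → ℝ}
    {a : StrongDual ℝ (ι → ℝ)} {c : ℝ} (h : ∀ s, a (inputCurve A B s) = c) (s : ℝ) :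
    a (inputCurve A (A *ᵥ B) s) = 0 := by
  have hderiv := a.hasFDerivAt.comp_hasDerivAt s (hasDerivAt_inputCurve A B s)
  have hconst : a ∘ inputCurve A B = fun _ => c := funext h
  rw [hconst, map_neg] at hderiv
  exact neg_eq_zero.1 (hderiv.unique (hasDerivAt_const s c))

lemma apply_pow_succ_mulVec_eq_zero {A : Matrix ι ι ℝ} {a : StrongDual ℝ (ι → ℝ)} (k : ℕ) :
    ∀ {B : ι → ℝ} {c : ℝ}, (∀ s, a (inputCurve A B s) = c) → a (A ^ (k + 1) *ᵥ B) = 0 := by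
  induction k with
  | zero =>
    intro B c h
    simpa [inputCurve_zero] using apply_inputCurve_mulVec_eq_zero h 0
  | succ k ih =>
    intro B c h
    rw [pow_succ, ← Matrix.mulVec_mulVec]
    exact ih (apply_inputCurve_mulVec_eq_zero h)

/-- Normality of the pair `(A, B)`: no nonzero component `a (e^{-As} B)` takes a given value on a
set of positive measure. -/
def IsNormalPair (A : Matrix ι ι ℝ) (B : ι → ℝ) : Prop :=
  ∀ a : StrongDual ℝ (ι → ℝ), a ≠ 0 → ∀ c : ℝ, ∀ᵐ s, a (inputCurve A B s) ≠ c

end InputCurve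

section Controllability

open scoped Matrix

variable {n : ℕ} {A : Matrix (Fin n) (Fin n) ℝ} {B : Fin n → ℝ}

lemma eq_zero_of_apply_pow_mulVec_eq_zero (hctrb : (ctrbMatrix n A B).rank = n)
    {a : Module.Dual ℝ (Fin n → ℝ)} (h : ∀ k : ℕ, a (A ^ k *ᵥ B) = 0) : a = 0 := by
  have hrange : Submodule.span ℝ (range (ctrbMatrix n A B).col) = ⊤ := by
    apply Submodule.eq_top_of_finrank_eq
    rw [← Matrix.rank_eq_finrank_span_cols, hctrb, Module.finrank_fin_fun]
  exact LinearMap.ext_on hrange (forall_mem_range.2 fun j => h j)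

lemma isNormalPair_of_controllable (hctrb : (ctrbMatrix n A B).rank = n) (hA : A.det ≠ 0) :
    IsNormalPair A B := by
  intro a ha c
  obtain ⟨s, hs⟩ : ∃ s, a (inputCurve A B s) ≠ c := by
    by_contra! hconst
    have haA : (a : Module.Dual ℝ (Fin n → ℝ)) ∘ₗ A.mulVecLin = 0 :=
      eq_zero_of_apply_pow_mulVec_eq_zero hctrb fun k => by
        simpa [pow_succ'] using apply_pow_succ_mulVec_eq_zero k hconst
    have hsurj : Function.Surjective A.mulVecLin :=
      Matrix.mulVec_surjective_iff_isUnit.2 ((Matrix.isUnit_iff_isUnit_det A).2 hA.isUnit)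
    refine ha (ContinuousLinearMap.ext fun x => ?_)
    obtain ⟨y, rfl⟩ := hsurj x
    exact DFunLike.congr_fun haA y
  exact ae_ne_of_analyticOnNhd
    (fun t ht => (a.analyticAt _).comp (analyticOnNhd_inputCurve A B t ht)) hs

end Controllability

section BangOffBang

variable {α : Type*} [MeasurableSpace α] {μ : Measure α}

/-- A control subject to the magnitude constraint `|u| ≤ 1`. -/
structure IsUnitControl (μ : Measure α) (u : α → ℝ) : Prop where
  aestronglyMeasurable : AEStronglyMeasurable u μ
  abs_le_one : ∀ᵐ x ∂μ, |u x| ≤ 1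

namespace IsUnitControl

variable {u v : α → ℝ}

protected lemma abs (hu : IsUnitControl μ u) : IsUnitControl μ fun x => |u x| :=
  ⟨hu.aestronglyMeasurable.norm, by simpa only [abs_abs] using hu.abs_le_one⟩

variable {F : Type*} [NormedAddCommGroup F] [NormedSpace ℝ F] {Φ : α → F}

lemma integrable_smul (hu : IsUnitControl μ u) (hΦ : Integrable Φ μ) :
    Integrable (fun x => u x • Φ x) μ :=
  hΦ.bdd_smul 1 hu.aestronglyMeasurable hu.abs_le_one

lemma integrable [IsFiniteMeasure μ] (hu : IsUnitControl μ u) : Integrable u μ := by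
  simpa using hu.integrable_smul (integrable_const (1 : ℝ))

lemma tendsto_integral_smul {u : ℕ → α → ℝ} (hu : ∀ k, IsUnitControl μ (u k))
    (hlim : ∀ᵐ x ∂μ, Tendsto (fun k => u k x) atTop (𝓝 (v x))) (hΦ : Integrable Φ μ) :
    Tendsto (fun k => ∫ x, u k x • Φ x ∂μ) atTop (𝓝 (∫ x, v x • Φ x ∂μ)) := by
  refine tendsto_integral_of_dominated_convergence (fun x => ‖Φ x‖)
    (fun k => ((hu k).integrable_smul hΦ).aestronglyMeasurable) hΦ.norm (fun k => ?_) ?_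
  · filter_upwards [(hu k).abs_le_one] with x hx
    rw [norm_smul]
    exact mul_le_of_le_one_left (norm_nonneg _) hx
  · filter_upwards [hlim] with x hx using hx.smul_const _

lemma tendsto_integral_abs [IsFiniteMeasure μ] {u : ℕ → α → ℝ}
    (hu : ∀ k, IsUnitControl μ (u k))
    (hlim : ∀ᵐ x ∂μ, Tendsto (fun k => u k x) atTop (𝓝 (v x))) :
    Tendsto (fun k => ∫ x, |u k x| ∂μ) atTop (𝓝 (∫ x, |v x| ∂μ)) := by
  simpa using tendsto_integral_smul (fun k => (hu k).abs) (hlim.mono fun x hx => hx.abs)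
    (integrable_const (1 : ℝ))

end IsUnitControl

/-- The bang-off-bang feedback: a minimizer of `v ↦ p |v| + q v` over `|v| ≤ 1`, the only one
unless `|q| = p`. -/
def bangOffBang (p q : ℝ) : ℝ := if p < q then -1 else if q < -p then 1 else 0

lemma abs_bangOffBang_le_one (p q : ℝ) : |bangOffBang p q| ≤ 1 := by
  unfold bangOffBang
  split_ifs <;> simp

lemma measurable_bangOffBang (p : ℝ) : Measurable (bangOffBang p) :=
  Measurable.ite measurableSet_Ioi measurable_const
    (Measurable.ite measurableSet_Iio measurable_const measurable_const)

lemma isUnitControl_bangOffBang (p : ℝ) {q : α → ℝ} (hq : AEMeasurable q μ) :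
    IsUnitControl μ fun x => bangOffBang p (q x) :=
  ⟨((measurable_bangOffBang p).comp_aemeasurable hq).aestronglyMeasurable,
    .of_forall fun _ => abs_bangOffBang_le_one _ _⟩

lemma abs_mul_sub_bangOffBang_le {p q v : ℝ} (hp : 0 ≤ p) (hv : |v| ≤ 1) :
    |(|q| - p) * (v - bangOffBang p q)| ≤
      (p * |v| + v * q) - (p * |bangOffBang p q| + bangOffBang p q * q) := by
  obtain ⟨hv₁, hv₂⟩ := abs_le.1 hv
  unfold bangOffBang
  split_ifs with hpq hqp
  · have hq : 0 ≤ q := hp.trans hpq.le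
    rw [abs_of_nonneg hq, abs_of_nonneg (mul_nonneg (by linarith) (by linarith)), abs_neg, abs_one]
    nlinarith [neg_abs_le v]
  · have hq : q ≤ 0 := by linarith
    rw [abs_of_nonpos hq, abs_of_nonpos (mul_nonpos_of_nonneg_of_nonpos (by linarith)
      (by linarith)), abs_one]
    nlinarith [le_abs_self v]
  · have hq : |q| ≤ p := abs_le.2 ⟨by linarith, by linarith⟩
    rw [abs_mul, abs_of_nonpos (by linarith)]
    have hvq : -(|v| * |q|) ≤ v * q := by
      rw [← abs_mul]
      exact neg_abs_le _
    simp only [sub_zero, abs_zero, mul_zero, zero_mul, add_zero]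
    linarith

/-- The running cost `p |u| + u q` integrated, for a weight `p` and a switching function `q`. -/
def weightedCost (μ : Measure α) (p : ℝ) (q u : α → ℝ) : ℝ := ∫ x, (p * |u x| + u x * q x) ∂μ

lemma weightedCost_apply_eq [IsFiniteMeasure μ] {F : Type*} [NormedAddCommGroup F] [NormedSpace ℝ F]
    [CompleteSpace F] {Φ : α → F} (hΦ : Integrable Φ μ) {u : α → ℝ} (hu : IsUnitControl μ u)
    (p : ℝ) (a : StrongDual ℝ F) :
    weightedCost μ p (fun x => a (Φ x)) u = p * ∫ x, |u x| ∂μ + a (∫ x, u x • Φ x ∂μ) := by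
  have hau := hu.integrable_smul (a.integrable_comp hΦ)
  rw [weightedCost, ← integral_const_mul, ← a.integral_comp_comm (hu.integrable_smul hΦ)]
  simp only [map_smul]
  exact integral_add (hu.abs.integrable.const_mul p) hau

variable [IsFiniteMeasure μ] {p : ℝ} {q : α → ℝ}

lemma integral_abs_mul_sub_bangOffBang_le (hp : 0 ≤ p) (hq : Integrable q μ) {u : α → ℝ}
    (hu : IsUnitControl μ u) :
    ∫ x, |(|q x| - p) * (u x - bangOffBang p (q x))| ∂μ ≤
      weightedCost μ p q u - weightedCost μ p q (fun x => bangOffBang p (q x)) := by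
  have hint {v : α → ℝ} (hv : IsUnitControl μ v) :
      Integrable (fun x => p * |v x| + v x * q x) μ :=
    (hv.abs.integrable.const_mul p).add (hv.integrable_smul hq)
  have hstar := isUnitControl_bangOffBang p hq.aemeasurable
  rw [weightedCost, weightedCost, ← integral_sub (hint hu) (hint hstar)]
  refine integral_mono_of_nonneg (.of_forall fun _ => abs_nonneg _)
    ((hint hu).sub (hint hstar)) ?_
  filter_upwards [hu.abs_le_one] with x hx using abs_mul_sub_bangOffBang_le hp hx

lemma weightedCost_bangOffBang_le (hp : 0 ≤ p) (hq : Integrable q μ) {u : α → ℝ}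
    (hu : IsUnitControl μ u) :
    weightedCost μ p q (fun x => bangOffBang p (q x)) ≤ weightedCost μ p q u :=
  sub_nonneg.1 <| (integral_nonneg fun _ => abs_nonneg _).trans
    (integral_abs_mul_sub_bangOffBang_le hp hq hu)

lemma exists_seq_tendsto_ae_bangOffBang (hp : 0 ≤ p) (hq : Integrable q μ)
    (hne : ∀ᵐ x ∂μ, |q x| ≠ p) {u : ℕ → α → ℝ} (hu : ∀ k, IsUnitControl μ (u k))
    (hlim : Tendsto (fun k => weightedCost μ p q (u k)) atTop
      (𝓝 (weightedCost μ p q fun x => bangOffBang p (q x)))) :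
    ∃ ns : ℕ → ℕ, StrictMono ns ∧
      ∀ᵐ x ∂μ, Tendsto (fun k => u (ns k) x) atTop (𝓝 (bangOffBang p (q x))) := by
  have hstar := isUnitControl_bangOffBang p hq.aemeasurable
  have hw : Integrable (fun x => |q x| - p) μ := hq.abs.sub (integrable_const p)
  obtain ⟨ns, hns, hae⟩ := exists_seq_tendsto_ae_of_tendsto_integral_abs_mul
    (w := fun x => |q x| - p) (f := fun k x => u k x - bangOffBang p (q x))
    (hne.mono fun x hx => sub_ne_zero.2 hx)
    (fun k => (((hu k).integrable_smul hw).sub (hstar.integrable_smul hw)).congr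
      (.of_forall fun x => by simp only [Pi.sub_apply, smul_eq_mul]; ring))
    (squeeze_zero (fun k => integral_nonneg fun _ => abs_nonneg _)
      (fun k => integral_abs_mul_sub_bangOffBang_le hp hq (hu k))
      (tendsto_sub_nhds_zero_iff.2 hlim))
  exact ⟨ns, hns, hae.mono fun x hx => tendsto_sub_nhds_zero_iff.1 hx⟩

end BangOffBang

section ValueFunction

variable {n : ℕ} {T : ℝ} {A : Matrix (Fin n) (Fin n) ℝ} {B : Fin n → ℝ} {ξ η : Fin n → ℝ}
  {u v : ℝ → ℝ}

lemma MagBdd.isUnitControl (hm : Measurable u) (hu : MagBdd T u) :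
    IsUnitControl (volume.restrict (Icc 0 T)) u :=
  ⟨hm.aestronglyMeasurable, ae_restrict_of_forall_mem measurableSet_Icc hu⟩

lemma Admissible.isUnitControl (hu : Admissible n T A B ξ u) :
    IsUnitControl (volume.restrict (Icc 0 T)) u :=
  hu.2.1.isUnitControl hu.1

lemma integrable_inputCurve (T : ℝ) (A : Matrix (Fin n) (Fin n) ℝ) (B : Fin n → ℝ) :
    Integrable (inputCurve A B) (volume.restrict (Icc 0 T)) :=
  (continuous_inputCurve A B).continuousOn.integrableOn_Icc

lemma stateInt_combo (hu : IsUnitControl (volume.restrict (Icc 0 T)) u)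
    (hv : IsUnitControl (volume.restrict (Icc 0 T)) v) (c d : ℝ) :
    stateInt n T A B (fun s => c * u s + d * v s) =
      c • stateInt n T A B u + d • stateInt n T A B v := by
  have hint := integrable_inputCurve T A B
  have hadd := integral_add ((hu.integrable_smul hint).smul c) ((hv.integrable_smul hint).smul d)
  simp only [Pi.smul_apply, integral_smul] at hadd
  refine Eq.trans ?_ hadd
  simp only [stateInt, add_smul, mul_smul, inputCurve]

lemma abs_combo_le {c d : ℝ} (hc : 0 ≤ c) (hd : 0 ≤ d) (x y : ℝ) :
    |c * x + d * y| ≤ c * |x| + d * |y| := by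
  simpa only [abs_mul, abs_of_nonneg hc, abs_of_nonneg hd] using abs_add_le (c * x) (d * y)

/-- The Lagrangian of the `L¹` problem for the multipliers `(p, a)` of the cost and of the state
constraint, up to the constant `a ξ`. -/
def lagrangian (T : ℝ) (A : Matrix (Fin n) (Fin n) ℝ) (B : Fin n → ℝ) (p : ℝ)
    (a : StrongDual ℝ (Fin n → ℝ)) (u : ℝ → ℝ) : ℝ :=
  weightedCost (volume.restrict (Icc 0 T)) p (fun s => a (inputCurve A B s)) u

namespace Admissible

lemma combo (hu : Admissible n T A B ξ u) (hv : Admissible n T A B η v) {c d : ℝ}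
    (hc : 0 ≤ c) (hd : 0 ≤ d) (hcd : c + d = 1) :
    Admissible n T A B (c • ξ + d • η) fun s => c * u s + d * v s := by
  refine ⟨(hu.1.const_mul c).add (hv.1.const_mul d), fun s hs => ?_, ?_⟩
  · calc |c * u s + d * v s| ≤ c * |u s| + d * |v s| := abs_combo_le hc hd _ _
      _ ≤ c * 1 + d * 1 := by gcongr; exacts [hu.2.1 s hs, hv.2.1 s hs]
      _ = 1 := by rw [mul_one, mul_one, hcd]
  · rw [stateInt_combo hu.isUnitControl hv.isUnitControl, hu.2.2, hv.2.2, smul_neg, smul_neg,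
      neg_add]

lemma initial_state_unique (hξ : Admissible n T A B ξ u) (hη : Admissible n T A B η u) : ξ = η :=
  neg_injective (hξ.2.2.symm.trans hη.2.2)

lemma lagrangian_eq (hu : Admissible n T A B ξ u) (p : ℝ) (a : StrongDual ℝ (Fin n → ℝ)) :
    lagrangian T A B p a u = p * L1Norm T u - a ξ := by
  have hstate : ∫ s in Icc 0 T, u s • inputCurve A B s = -ξ := hu.2.2
  rw [lagrangian, weightedCost_apply_eq (integrable_inputCurve T A B) hu.isUnitControl, hstate,
    map_neg, ← sub_eq_add_neg, L1Norm]

lemma V1_le (hu : Admissible n T A B ξ u) : V1 n T A B ξ ≤ L1Norm T u :=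
  csInf_le ⟨0, fun _ ⟨_, _, h⟩ => h.ge.trans' (integral_nonneg fun _ => abs_nonneg _)⟩ ⟨u, hu, rfl⟩

lemma V0_le (hu : Admissible n T A B ξ u) : V0 n T A B ξ ≤ L0Norm T u :=
  csInf_le ⟨0, fun _ ⟨_, _, h⟩ => h.ge.trans' ENNReal.toReal_nonneg⟩ ⟨u, hu, rfl⟩

end Admissible

lemma mem_Reach_iff : ξ ∈ Reach n T A B ↔ ∃ u, Admissible n T A B ξ u := by
  have hneg (u : ℝ → ℝ) : stateInt n T A B (-u) = -stateInt n T A B u := by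
    simp [stateInt, integral_neg]
  constructor
  · rintro ⟨u, hm, hu, rfl⟩
    exact ⟨-u, hm.neg, fun s hs => by simpa using hu s hs, hneg u⟩
  · rintro ⟨u, hm, hu, hξ⟩
    exact ⟨-u, hm.neg, fun s hs => by simpa using hu s hs, by rw [hneg, hξ, neg_neg]⟩

lemma convex_Reach : Convex ℝ (Reach n T A B) := fun ξ hξ η hη c d hc hd hcd => by
  obtain ⟨u, hu⟩ := mem_Reach_iff.1 hξ
  obtain ⟨v, hv⟩ := mem_Reach_iff.1 hη
  exact mem_Reach_iff.2 ⟨_, hu.combo hv hc hd hcd⟩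

lemma exists_seq_tendsto_V1 (hξ : ξ ∈ Reach n T A B) :
    ∃ u : ℕ → ℝ → ℝ, (∀ k, Admissible n T A B ξ (u k)) ∧
      Tendsto (fun k => L1Norm T (u k)) atTop (𝓝 (V1 n T A B ξ)) := by
  obtain ⟨u, hu⟩ := mem_Reach_iff.1 hξ
  obtain ⟨c, -, hlim, hc⟩ := exists_seq_tendsto_sInf
    (S := {c | ∃ u, Admissible n T A B ξ u ∧ c = L1Norm T u}) ⟨_, u, hu, rfl⟩
    ⟨0, fun _ ⟨_, _, h⟩ => h.ge.trans' (integral_nonneg fun _ => abs_nonneg _)⟩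
  choose w hw hcw using hc
  exact ⟨w, hw, hlim.congr hcw⟩

lemma L1Norm_combo_le (hu : IsUnitControl (volume.restrict (Icc 0 T)) u)
    (hv : IsUnitControl (volume.restrict (Icc 0 T)) v) {c d : ℝ} (hc : 0 ≤ c) (hd : 0 ≤ d) :
    L1Norm T (fun s => c * u s + d * v s) ≤ c * L1Norm T u + d * L1Norm T v := by
  have huc := hu.abs.integrable.const_mul c
  have hvd := hv.abs.integrable.const_mul d
  unfold L1Norm
  rw [← integral_const_mul, ← integral_const_mul, ← integral_add huc hvd]
  exact integral_mono_of_nonneg (.of_forall fun _ => abs_nonneg _) (huc.add hvd)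
    (.of_forall fun s => abs_combo_le hc hd (u s) (v s))

lemma convexOn_V1 : ConvexOn ℝ (Reach n T A B) (V1 n T A B) := by
  refine ⟨convex_Reach, fun ξ hξ η hη c d hc hd hcd => ?_⟩
  obtain ⟨u, hu, hulim⟩ := exists_seq_tendsto_V1 hξ
  obtain ⟨v, hv, hvlim⟩ := exists_seq_tendsto_V1 hη
  exact ge_of_tendsto' ((hulim.const_mul c).add (hvlim.const_mul d)) fun k =>
    ((hu k).combo (hv k) hc hd hcd).V1_le.trans
      (L1Norm_combo_le (hu k).isUnitControl (hv k).isUnitControl hc hd)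

lemma L0Norm_eq_integral (hm : Measurable u) :
    L0Norm T u = ∫ s in Icc 0 T, {t | u t ≠ 0}.indicator 1 s := by
  have hsupp : MeasurableSet {t | u t ≠ 0} := hm (measurableSet_singleton 0).compl
  rw [integral_indicator_one hsupp, measureReal_restrict_apply hsupp, inter_comm]
  rfl

lemma L1Norm_le_L0Norm (hm : Measurable u) (hu : MagBdd T u) : L1Norm T u ≤ L0Norm T u := by
  rw [L0Norm_eq_integral hm]
  refine integral_mono_of_nonneg (.of_forall fun _ => abs_nonneg _)
    ((integrable_const 1).indicator (hm (measurableSet_singleton 0).compl)) ?_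
  filter_upwards [(hu.isUnitControl hm).abs_le_one] with s hs
  by_cases h : u s = 0 <;> simp [h, hs]

lemma V1_le_V0 (hξ : ξ ∈ Reach n T A B) : V1 n T A B ξ ≤ V0 n T A B ξ := by
  obtain ⟨u, hu⟩ := mem_Reach_iff.1 hξ
  refine le_csInf ⟨_, u, hu, rfl⟩ ?_
  rintro _ ⟨w, hw, rfl⟩
  exact hw.V1_le.trans (L1Norm_le_L0Norm hw.1 hw.2.1)

/-- The extremal control of Pontryagin's principle for the multipliers `(p, a)`. -/
def extremalControl (A : Matrix (Fin n) (Fin n) ℝ) (B : Fin n → ℝ) (p : ℝ)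
    (a : StrongDual ℝ (Fin n → ℝ)) (s : ℝ) : ℝ :=
  bangOffBang p (a (inputCurve A B s))

variable {p : ℝ} {a : StrongDual ℝ (Fin n → ℝ)}

lemma measurable_extremalControl : Measurable (extremalControl A B p a) :=
  (measurable_bangOffBang p).comp (a.continuous.comp (continuous_inputCurve A B)).measurable

lemma magBdd_extremalControl : MagBdd T (extremalControl A B p a) :=
  fun _ _ => abs_bangOffBang_le_one _ _

lemma L0Norm_extremalControl :
    L0Norm T (extremalControl A B p a) = L1Norm T (extremalControl A B p a) := by
  rw [L0Norm_eq_integral measurable_extremalControl, L1Norm]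
  congr with s
  simp only [indicator, mem_ofPred_eq, extremalControl, bangOffBang]
  split_ifs <;> simp_all

lemma integrable_apply_inputCurve (T : ℝ) (A : Matrix (Fin n) (Fin n) ℝ) (B : Fin n → ℝ)
    (a : StrongDual ℝ (Fin n → ℝ)) :
    Integrable (fun s => a (inputCurve A B s)) (volume.restrict (Icc 0 T)) :=
  a.integrable_comp (integrable_inputCurve T A B)

lemma lagrangian_extremalControl_le (hp : 0 ≤ p) (hξ : ξ ∈ Reach n T A B) :
    lagrangian T A B p a (extremalControl A B p a) ≤ p * V1 n T A B ξ - a ξ := by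
  obtain ⟨u, hu, hlim⟩ := exists_seq_tendsto_V1 hξ
  refine ge_of_tendsto' ((hlim.const_mul p).sub_const (a ξ)) fun k => ?_
  rw [← (hu k).lagrangian_eq]
  exact weightedCost_bangOffBang_le hp (integrable_apply_inputCurve T A B a) (hu k).isUnitControl

/-- Along a minimizing sequence for `V1` at `ξ` the Lagrangian tends to its minimum, so the
sequence converges to the extremal control almost everywhere, up to extraction. -/
lemma extremalControl_optimal (hp : 0 ≤ p) (hne : ∀ᵐ s, |a (inputCurve A B s)| ≠ p)
    (hξ : ξ ∈ Reach n T A B)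
    (hle : p * V1 n T A B ξ - a ξ ≤ lagrangian T A B p a (extremalControl A B p a)) :
    Admissible n T A B ξ (extremalControl A B p a) ∧
      L1Norm T (extremalControl A B p a) = V1 n T A B ξ := by
  obtain ⟨u, hu, hL1⟩ := exists_seq_tendsto_V1 hξ
  have hlag : Tendsto (fun k => lagrangian T A B p a (u k)) atTop
      (𝓝 (lagrangian T A B p a (extremalControl A B p a))) := by
    simp only [(hu _).lagrangian_eq]
    rw [(lagrangian_extremalControl_le hp hξ).antisymm hle]
    exact (hL1.const_mul p).sub_const (a ξ)
  obtain ⟨ns, hns, hae⟩ := exists_seq_tendsto_ae_bangOffBang hp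
    (integrable_apply_inputCurve T A B a) (ae_restrict_of_ae hne)
    (fun k => (hu k).isUnitControl) hlag
  have hunit (k : ℕ) := (hu (ns k)).isUnitControl
  have hstate : Tendsto (fun k => stateInt n T A B (u (ns k))) atTop
      (𝓝 (stateInt n T A B (extremalControl A B p a))) :=
    IsUnitControl.tendsto_integral_smul hunit hae (integrable_inputCurve T A B)
  have hL1' : Tendsto (fun k => L1Norm T (u (ns k))) atTop
      (𝓝 (L1Norm T (extremalControl A B p a))) :=
    IsUnitControl.tendsto_integral_abs hunit hae
  simp only [(hu _).2.2] at hstate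
  exact ⟨⟨measurable_extremalControl, magBdd_extremalControl,
    tendsto_nhds_unique tendsto_const_nhds hstate |>.symm⟩,
    tendsto_nhds_unique hL1' (hL1.comp hns.tendsto_atTop)⟩

lemma IsNormalPair.ae_abs_ne (hAB : IsNormalPair A B) (ha : p = 0 → a ≠ 0) :
    ∀ᵐ s, |a (inputCurve A B s)| ≠ p := by
  by_cases ha0 : a = 0
  · have hp : p ≠ 0 := fun hp => ha hp ha0
    simp [ha0, hp.symm]
  · filter_upwards [hAB a ha0 p, hAB a ha0 (-p)] with s hs hs' habs
    rcases eq_or_eq_neg_of_abs_eq habs with h | h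
    exacts [hs h, hs' h]

lemma exists_extremalControl_optimal (hAB : IsNormalPair A B) (hξ : ξ ∈ Reach n T A B) :
    ∃ p : ℝ, 0 ≤ p ∧ ∃ a : StrongDual ℝ (Fin n → ℝ),
      Admissible n T A B ξ (extremalControl A B p a) ∧
      L1Norm T (extremalControl A B p a) = V1 n T A B ξ ∧
      ∀ η ∈ Reach n T A B, η ≠ ξ → p * V1 n T A B ξ - a ξ < p * V1 n T A B η - a η := by
  obtain ⟨p, hp, a, ha, hsup⟩ := exists_multipliers_of_convexOn convexOn_V1 hξ
  have hne := hAB.ae_abs_ne ha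
  set w := extremalControl A B p a
  have hη : Admissible n T A B (-stateInt n T A B w) w :=
    ⟨measurable_extremalControl, magBdd_extremalControl, (neg_neg _).symm⟩
  have hle : p * V1 n T A B ξ - a ξ ≤ lagrangian T A B p a w := by
    rw [hη.lagrangian_eq]
    refine (hsup _ (mem_Reach_iff.2 ⟨w, hη⟩)).trans ?_
    gcongr
    exact hη.V1_le
  obtain ⟨hadm, hL1⟩ := extremalControl_optimal hp hne hξ hle
  refine ⟨p, hp, a, hadm, hL1, fun η hη hηξ => (hsup η hη).lt_of_ne fun heq => hηξ ?_⟩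
  exact (extremalControl_optimal hp hne hη (heq ▸ hle)).1.initial_state_unique hadm

lemma V0_eq_V1 (hAB : IsNormalPair A B) (hξ : ξ ∈ Reach n T A B) :
    V0 n T A B ξ = V1 n T A B ξ := by
  obtain ⟨p, -, a, hadm, hL1, -⟩ := exists_extremalControl_optimal hAB hξ
  exact (hadm.V0_le.trans_eq (L0Norm_extremalControl.trans hL1)).antisymm (V1_le_V0 hξ)

lemma strictConvexOn_V1 (hAB : IsNormalPair A B) :
    StrictConvexOn ℝ (Reach n T A B) (V1 n T A B) :=
  strictConvexOn_of_forall_exists_multipliers convex_Reach fun _ hξ =>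
    let ⟨p, hp, a, _, _, hlt⟩ := exists_extremalControl_optimal hAB hξ
    ⟨p, hp, a, hlt⟩

lemma strictConvexOn_V0 (hAB : IsNormalPair A B) :
    StrictConvexOn ℝ (Reach n T A B) (V0 n T A B) :=
  (strictConvexOn_V1 hAB).congr fun _ hξ => (V0_eq_V1 hAB hξ).symm

end ValueFunction

theorem value_function_strictly_convex (n : ℕ) (T : ℝ) (hT : 0 < T)
    (A : Matrix (Fin n) (Fin n) ℝ) (B : Fin n → ℝ)
    (hctrb : (ctrbMatrix n A B).rank = n) (hA : A.det ≠ 0) :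
    ∀ ξ ∈ Reach n T A B, ∀ η ∈ Reach n T A B, ξ ≠ η →
      ∀ l : ℝ, 0 < l → l < 1 →
        V0 n T A B ((1 - l) • ξ + l • η)
          < (1 - l) * V0 n T A B ξ + l * V0 n T A B η := by
  intro ξ hξ η hη hne l hl₀ hl₁
  exact (strictConvexOn_V0 (isNormalPair_of_controllable hctrb hA)).2 hξ hη hne
    (sub_pos.2 hl₁) hl₀ (sub_add_cancel 1 l)
end
end
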